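/- arXiv:2009.09475 — 2 statements merged into one kernel-verified Lean document; each statement's English description precedes it below -/
import Mathlib

section
/- Let E be a finite-dimensional complex vector space, let U ⊆ ℂ be open and connected, and let w₁, …, w_k : U → E be holomorphic maps such that for every t ∈ U the vectors w₁(t), …, w_k(t) are linearly independent, and for every t ∈ U and every i ∈ {1,…,k} the derivative w_i'(t) lies in the linear span of {w₁(t), …, w_k(t)}. Then the subspace span{w₁(t), …, w_k(t)} of E is the same for all t ∈ U. -/
open Topology Filter in
theorem span_local_const_aux
    {E : Type*} [NormedAddCommGroup E] [NormedSpace ℂ E] [FiniteDimensional ℂ E]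
    (k : ℕ) (U : Set ℂ) (hU : IsOpen U)
    (w : Fin k → ℂ → E)
    (hdiff : ∀ i, ∀ t ∈ U, DifferentiableAt ℂ (w i) t)
    (hindep : ∀ t ∈ U, LinearIndependent ℂ fun i => w i t)
    (hder : ∀ t ∈ U, ∀ i, deriv (w i) t ∈ Submodule.span ℂ (Set.range fun j => w j t))
    (s : ℂ) (hs : s ∈ U) :
    ∀ᶠ t in 𝓝 s, Submodule.span ℂ (Set.range fun i => w i s) =
        Submodule.span ℂ (Set.range fun i => w i t) := by
  let F := Fin k → ℂ
  let L : ℂ → (F →L[ℂ] E) := fun t =>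
    ∑ i, ContinuousLinearMap.smulRightL ℂ F E (ContinuousLinearMap.proj i) (w i t)
  have hLa : ∀ t x, L t x = ∑ i, x i • w i t := by
    intro t x
    simp [L]
    rfl
  have hmem : ∀ t v, v ∈ Submodule.span ℂ (Set.range fun j => w j t) ↔ ∃ x, L t x = v := by
    intro t v
    rw [Submodule.mem_span_range_iff_exists_fun]
    simp only [hLa]; rfl
  have hLd : ∀ t ∈ U, HasDerivAt L (∑ i, ContinuousLinearMap.smulRightL ℂ F E
      (ContinuousLinearMap.proj i) (deriv (w i) t)) t := by
    intro t ht
    apply HasDerivAt.fun_sum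
    intro i _
    exact (ContinuousLinearMap.hasFDerivAt _).comp_hasDerivAt t (hdiff i t ht).hasDerivAt
  have hinj : Function.Injective (L s) := by
    rw [injective_iff_map_eq_zero]
    intro x hx
    rw [hLa] at hx
    exact funext (Fintype.linearIndependent_iff.1 (hindep s hs) x hx)
  obtain ⟨P0, hP0⟩ := LinearMap.exists_leftInverse_of_injective (L s : F →ₗ[ℂ] E)
    (LinearMap.ker_eq_bot.2 hinj)
  let P : E →L[ℂ] F := LinearMap.toContinuousLinearMap P0
  have hP : P ∘L L s = 1 := by
    ext1 x
    exact LinearMap.congr_fun hP0 x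
  let A : ℂ → (F →L[ℂ] F) := fun t => P ∘L L t
  have hAd : ∀ t ∈ U, DifferentiableAt ℂ A t := fun t ht =>
    ((hasDerivAt_const t P).clm_comp (hLd t ht)).differentiableAt
  have hunit : ∀ᶠ t in 𝓝 s, IsUnit (A t) := by
    apply (hAd s hs).continuousAt.eventually
    apply Units.isOpen.mem_nhds
    change IsUnit (A s)
    simp only [A, hP, isUnit_one]
  obtain ⟨r, hr, hball⟩ := Metric.eventually_nhds_iff_ball.1 (hunit.and (hU.mem_nhds hs))
  let B : ℂ → (F →L[ℂ] F) := fun t => Ring.inverse (A t)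
  have hBd : ∀ t ∈ Metric.ball s r, DifferentiableAt ℂ B t := by
    intro t ht
    obtain ⟨a, ha⟩ := (hball t ht).1
    have h1 : DifferentiableAt ℂ Ring.inverse (A t) := by
      rw [← ha]; exact differentiableAt_inverse a.isUnit
    exact h1.comp t (hAd t (hball t ht).2)
  let u : ℂ → (F →L[ℂ] E) := fun t => L t ∘L B t
  have hud : ∀ t (ht : t ∈ Metric.ball s r), HasDerivAt u _ t := fun t ht =>
    (hLd t (hball t ht).2).clm_comp (hBd t ht).hasDerivAt
  have hPu : ∀ t ∈ Metric.ball s r, P ∘L u t = 1 := by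
    intro t ht
    exact Ring.mul_inverse_cancel _ (hball t ht).1
  have hu0 : ∀ t ∈ Metric.ball s r, deriv u t = 0 := by
    intro t ht
    have hd := hud t ht
    have h1 : P ∘L deriv u t = 0 := by
      have e : (fun y => P ∘L u y) =ᶠ[𝓝 t] fun _ => 1 := by
        filter_upwards [Metric.isOpen_ball.mem_nhds ht] with y hy using hPu y hy
      have h2 := ((hasDerivAt_const t P).clm_comp hd.differentiableAt.hasDerivAt)
      have h3 := h2.unique ((hasDerivAt_const t (1 : F →L[ℂ] F)).congr_of_eventuallyEq e)
      simpa using h3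
    ext1 x
    have h4 : deriv u t x ∈ Submodule.span ℂ (Set.range fun j => w j t) := by
      rw [hd.deriv, ContinuousLinearMap.add_apply]
      refine Submodule.add_mem _ ?_ ((hmem _ _).2 ⟨_, rfl⟩)
      simp only [ContinuousLinearMap.comp_apply, ContinuousLinearMap.sum_apply]
      exact Submodule.sum_mem _ fun i _ => Submodule.smul_mem _ _ (hder t (hball t ht).2 i)
    obtain ⟨c, hc⟩ := (hmem _ _).1 h4
    have h5 : A t c = 0 := by
      change P (L t c) = 0
      rw [hc]
      exact congrArg (fun T : F →L[ℂ] F => T x) h1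
    have h6 : c = 0 := by
      have h7 : (B t * A t) c = c := by
        rw [Ring.inverse_mul_cancel _ (hball t ht).1]; rfl
      rw [← h7, ContinuousLinearMap.mul_apply, h5, map_zero]
    rw [← hc, h6, map_zero]; rfl
  have hconst : ∀ t ∈ Metric.ball s r, u s = u t := by
    intro t ht
    exact Metric.isOpen_ball.is_const_of_deriv_eq_zero (convex_ball s r).isPreconnected
      (fun y hy => (hud y hy).differentiableAt.differentiableWithinAt)
      hu0 (Metric.mem_ball_self hr) ht
  have hru : ∀ t ∈ Metric.ball s r, ∀ v,
      v ∈ Submodule.span ℂ (Set.range fun j => w j t) ↔ ∃ x, u t x = v := by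
    intro t ht v
    rw [hmem]
    constructor
    · rintro ⟨x, rfl⟩
      refine ⟨A t x, ?_⟩
      change L t ((B t * A t) x) = _
      rw [Ring.inverse_mul_cancel _ (hball t ht).1]; rfl
    · rintro ⟨x, rfl⟩
      exact ⟨B t x, rfl⟩
  filter_upwards [Metric.ball_mem_nhds s hr] with t ht
  ext v
  rw [hru s (Metric.mem_ball_self hr), hru t ht, hconst t ht]

/-- If `w₁, …, w_k : U → E` are holomorphic on an open connected set `U ⊆ ℂ`, pointwise
linearly independent, and each derivative `w_i'(t)` lies in `span {w₁(t), …, w_k(t)}`, then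
the subspace `span {w₁(t), …, w_k(t)}` of `E` is the same for all `t ∈ U`. -/
theorem span_constant_of_deriv_mem_span
    {E : Type*} [NormedAddCommGroup E] [NormedSpace ℂ E] [FiniteDimensional ℂ E]
    (k : ℕ) (U : Set ℂ) (hU : IsOpen U) (hconn : IsConnected U)
    (w : Fin k → ℂ → E)
    (hdiff : ∀ i, ∀ t ∈ U, DifferentiableAt ℂ (w i) t)
    (hindep : ∀ t ∈ U, LinearIndependent ℂ fun i => w i t)
    (hder : ∀ t ∈ U, ∀ i, deriv (w i) t ∈ Submodule.span ℂ (Set.range fun j => w j t)) :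
    ∀ s ∈ U, ∀ t ∈ U,
      Submodule.span ℂ (Set.range fun i => w i s) =
        Submodule.span ℂ (Set.range fun i => w i t) := by
  intro s hs t ht
  refine hconn.isPreconnected.induction₂ (fun s t =>
    Submodule.span ℂ (Set.range fun i => w i s) =
        Submodule.span ℂ (Set.range fun i => w i t)) ?_ ?_ ?_ hs ht
  · intro x hx
    exact (span_local_const_aux k U hU w hdiff hindep hder x hx).filter_mono nhdsWithin_le_nhds
  · intro x y z _ _ _ h1 h2
    exact h1.trans h2
  · intro x y _ _ h
    exact h.symm
end

section
/- Let x : ℂⁿ → ℂ^{N} be C^∞ near a point u⁰ ∈ ℂⁿ, with partial derivatives x_i = ∂x/∂u_i and x_{ij} = ∂²x/∂u_i∂u_j, and third derivatives x_{ijk}. Define y on variables (u, λ₂, …, λ_n, μ₂, …, μ_n, α, β) ∈ ℂⁿ × ℂ^{n−1} × ℂ^{n−1} × ℂ × ℂ by y = x(u) + α Σ_{i=1}^n λ_i x_i(u) + β ( Σ_{i,j=1}^n x_{ij}(u) λ_i λ_j + 2 Σ_{i=1}^n μ_i x_i(u) ), where by convention λ₁ = 1 and μ₁ = 0. Then at any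 point P = (u⁰, λ, μ, α, β) with α ≠ 0 and β ≠ 0, the linear span of {y(P)} together with the range of the Fréchet derivative of y at P equals the linear span of the 3n+1 vectors: x(u⁰); x_k(u⁰) for 1 ≤ k ≤ n; Σ_{i=1}^n x_{ij}(u⁰) λ_i for 1 ≤ j ≤ n; and Σ_{i,j=1}^n x_{kij}(u⁰) λ_i λ_j + 2 Σ_{j=2}^n x_{kj}(u⁰) μ_j for 1 ≤ k ≤ n. (This is the parametric content of Proposition 4.1: 2-osculating regularity of X is equivalent to the linear independence of these 3n+1 vectors.) -/
/-- The iterated partial derivative `x_{i₁…i_h}` of `x` at `q`. -/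
noncomputable def pdv {n : ℕ} {E : Type*} [NormedAddCommGroup E] [NormedSpace ℂ E]
    {h : ℕ} (x : (Fin n → ℂ) → E) (q : Fin n → ℂ) (idx : Fin h → Fin n) : E :=
  iteratedFDeriv ℂ h x q fun s => Pi.single (idx s) 1

section Derivatives

variable {n : ℕ} {E : Type*} [NormedAddCommGroup E] [NormedSpace ℂ E]

/-- `x_i(q)`. -/
noncomputable def pd1 (x : (Fin n → ℂ) → E) (q : Fin n → ℂ) (i : Fin n) : E :=
  pdv x q ![i]

/-- `x_{ij}(q)`. -/
noncomputable def pd2 (x : (Fin n → ℂ) → E) (q : Fin n → ℂ) (i j : Fin n) : E :=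
  pdv x q ![i, j]

/-- `x_{ijk}(q)`. -/
noncomputable def pd3 (x : (Fin n → ℂ) → E) (q : Fin n → ℂ) (i j k : Fin n) : E :=
  pdv x q ![i, j, k]

end Derivatives

/-- Extension of `(λ₂, …, λₙ)` to `(1, λ₂, …, λₙ)` (the convention `λ₁ = 1`). -/
noncomputable def extOne {n : ℕ} [NeZero n] (l : {i : Fin n // i ≠ 0} → ℂ) : Fin n → ℂ :=
  fun i => if h : i = 0 then 1 else l ⟨i, h⟩

/-- Extension of `(μ₂, …, μₙ)` to `(0, μ₂, …, μₙ)` (the convention `μ₁ = 0`). -/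
noncomputable def extZero {n : ℕ} [NeZero n] (m : {i : Fin n // i ≠ 0} → ℂ) : Fin n → ℂ :=
  fun i => if h : i = 0 then 0 else m ⟨i, h⟩

section Helpers

variable {n : ℕ} {E : Type*} [NormedAddCommGroup E] [NormedSpace ℂ E]

/-- Derivative of an iterated partial derivative. -/
lemma pdv_hasFDerivAt {h : ℕ} (x : (Fin n → ℂ) → E) (q : Fin n → ℂ)
    (hx : ContDiffAt ℂ (⊤ : ℕ∞) x q) (idx : Fin h → Fin n) :
    ∃ F' : (Fin n → ℂ) →L[ℂ] E, HasFDerivAt (fun u => pdv x u idx) F' q ∧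
      ∀ k, F' (Pi.single k 1) = pdv x q (Fin.cons k idx : Fin (h + 1) → Fin n) := by
  have h1 : DifferentiableAt ℂ (iteratedFDeriv ℂ h x) q := by
    apply hx.differentiableAt_iteratedFDeriv
    exact_mod_cast ENat.natCast_lt_top h
  refine ⟨_, ((ContinuousMultilinearMap.apply ℂ (fun _ : Fin h => (Fin n → ℂ)) E
    (fun s => Pi.single (idx s) 1)).hasFDerivAt.comp q h1.hasFDerivAt), ?_⟩
  intro k
  simp only [pdv, iteratedFDeriv_succ_apply_left]
  simp
  rfl

lemma pd2_symm (x : (Fin n → ℂ) → E) (q : Fin n → ℂ)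
    (hx : ContDiffAt ℂ (⊤ : ℕ∞) x q) (i j : Fin n) : pd2 x q i j = pd2 x q j i := by
  have h := (hx.isSymmSndFDerivAt (by rw [minSmoothness_of_isRCLikeNormedField]; exact WithTop.coe_le_coe.2 (le_top : (2 : ℕ∞) ≤ ⊤))).eq
    (Pi.single i 1) (Pi.single j 1)
  simp only [pd2, pdv, iteratedFDeriv_two_apply]
  simpa using h

/-- Coordinate projection, extended by zero. -/
noncomputable def prz [NeZero n] (i : Fin n) : ({i : Fin n // i ≠ 0} → ℂ) →L[ℂ] ℂ :=
  if h : i = 0 then 0 else ContinuousLinearMap.proj ⟨i, h⟩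

lemma extZero_eq [NeZero n] (m : {i : Fin n // i ≠ 0} → ℂ) (i : Fin n) :
    extZero m i = prz i m := by
  unfold extZero prz
  split_ifs <;> simp

lemma extOne_eq [NeZero n] (m : {i : Fin n // i ≠ 0} → ℂ) (i : Fin n) :
    extOne m i = prz i m + (if i = 0 then 1 else 0) := by
  unfold extOne prz
  split_ifs <;> simp

lemma prz_single [NeZero n] (j : {i : Fin n // i ≠ 0}) (i : Fin n) :
    prz i (Pi.single j 1) = if i = j then 1 else 0 := by
  unfold prz
  obtain ⟨j, hj⟩ := j
  split_ifs with h1 h2 h2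
  · exact absurd (h2.symm.trans h1) hj
  · rfl
  · subst h2; simp
  · simp [Pi.single_apply, h2]

lemma extOne_hasFDerivAt [NeZero n] (l : {i : Fin n // i ≠ 0} → ℂ) (i : Fin n) :
    HasFDerivAt (fun l => extOne l i) (prz i) l := by
  simp only [extOne_eq]
  exact (prz i).hasFDerivAt.add_const _

lemma extZero_hasFDerivAt [NeZero n] (l : {i : Fin n // i ≠ 0} → ℂ) (i : Fin n) :
    HasFDerivAt (fun l => extZero l i) (prz i) l := by
  simp only [extZero_eq]
  exact (prz i).hasFDerivAt

/-- Splitting off the zeroth index. -/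
lemma sum_split [NeZero n] (f : Fin n → E) :
    ∑ i, f i = f 0 + ∑ j : {i : Fin n // i ≠ 0}, f j := by
  rw [← Finset.add_sum_erase _ _ (Finset.mem_univ (0 : Fin n))]
  congr 1
  exact Finset.sum_subtype _ (by simp) _

end Helpers

/-- **Parametric content of 2-osculating regularity (Proposition 4.1 of the paper).**
With `y` the local parametrization of the cone over `Osc₂(X)`,
`y(u, λ, μ, α, β) = x(u) + α ∑ λ_i x_i(u) + β (∑ λ_i λ_j x_{ij}(u) + 2 ∑ μ_i x_i(u))`
(with `λ₁ = 1`, `μ₁ = 0`), at any point `P = (u₀, λ, μ, α, β)` with `α ≠ 0`, `β ≠ 0`,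
the span of `{y(P)}` together with the range of the Fréchet derivative of `y` at `P`
equals the span of the `3n+1` vectors `x(u₀)`, `x_k(u₀)`, `∑ λ_i x_{ij}(u₀)` and
`∑ λ_i λ_j x_{kij}(u₀) + 2 ∑_{j≥2} μ_j x_{kj}(u₀)`.
(The paper's index `1` is `0 : Fin n` here.) -/
theorem osc2_regularity_parametric (n N : ℕ) [NeZero n]
    (x : (Fin n → ℂ) → (Fin N → ℂ)) (u₀ : Fin n → ℂ)
    (hx : ContDiffAt ℂ (⊤ : ℕ∞) x u₀)
    (y : (Fin n → ℂ) × ({i : Fin n // i ≠ 0} → ℂ) × ({i : Fin n // i ≠ 0} → ℂ) × ℂ × ℂ →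
      (Fin N → ℂ))
    (hy : ∀ u l m a b, y (u, l, m, a, b) =
      x u + a • (∑ i, extOne l i • pd1 x u i)
        + b • ((∑ i, ∑ j, (extOne l i * extOne l j) • pd2 x u i j)
            + (2 : ℂ) • ∑ i, extZero m i • pd1 x u i))
    (l m : {i : Fin n // i ≠ 0} → ℂ) (a b : ℂ) (ha : a ≠ 0) (hb : b ≠ 0) :
    Submodule.span ℂ
      ({y (u₀, l, m, a, b)} ∪ Set.range (fderiv ℂ y (u₀, l, m, a, b)))
      =
    Submodule.span ℂ
      ({x u₀} ∪ Set.range (pd1 x u₀)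
        ∪ Set.range (fun j => ∑ i, extOne l i • pd2 x u₀ i j)
        ∪ Set.range (fun k =>
            (∑ i, ∑ j, (extOne l i * extOne l j) • pd3 x u₀ k i j)
              + (2 : ℂ) • ∑ j : {i : Fin n // i ≠ 0}, m j • pd2 x u₀ k (j : Fin n))) := by
  have hX : ∃ X' : (Fin n → ℂ) →L[ℂ] (Fin N → ℂ), HasFDerivAt x X' u₀ ∧
      ∀ k, X' (Pi.single k 1) = pd1 x u₀ k := by
    refine ⟨_, (hx.differentiableAt (by simp)).hasFDerivAt, fun k => ?_⟩
    simp [pd1, pdv, iteratedFDeriv_one_apply]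
  obtain ⟨X', hX', hXk⟩ := hX
  have hF : ∀ i, ∃ F' : (Fin n → ℂ) →L[ℂ] (Fin N → ℂ),
      HasFDerivAt (fun u => pd1 x u i) F' u₀ ∧
      ∀ k, F' (Pi.single k 1) = pd2 x u₀ k i := fun i => pdv_hasFDerivAt x u₀ hx ![i]
  choose F' hF' hFk using hF
  have hG : ∀ i j, ∃ G' : (Fin n → ℂ) →L[ℂ] (Fin N → ℂ),
      HasFDerivAt (fun u => pd2 x u i j) G' u₀ ∧
      ∀ k, G' (Pi.single k 1) = pd3 x u₀ k i j := fun i j => pdv_hasFDerivAt x u₀ hx ![i, j]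
  choose G' hG' hGk using hG
  have hsymm := pd2_symm x u₀ hx
  set P : (Fin n → ℂ) × ({i : Fin n // i ≠ 0} → ℂ) × ({i : Fin n // i ≠ 0} → ℂ) × ℂ × ℂ :=
    (u₀, l, m, a, b) with hP
  have hu : HasFDerivAt (fun p : (Fin n → ℂ) × ({i : Fin n // i ≠ 0} → ℂ) ×
      ({i : Fin n // i ≠ 0} → ℂ) × ℂ × ℂ => p.1) (ContinuousLinearMap.fst ℂ _ _) P := hasFDerivAt_fst
  have h2 : HasFDerivAt (fun p : (Fin n → ℂ) × ({i : Fin n // i ≠ 0} → ℂ) ×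
      ({i : Fin n // i ≠ 0} → ℂ) × ℂ × ℂ => p.2) (ContinuousLinearMap.snd ℂ _ _) P := hasFDerivAt_snd
  have hl := h2.fst
  have hm := h2.snd.fst
  have haa := h2.snd.snd.fst
  have hbb := h2.snd.snd.snd
  have eX := HasFDerivAt.comp P (g := x) hX' hu
  have eF := fun i => HasFDerivAt.comp P (g := fun u => pd1 x u i) (hF' i) hu
  have eG := fun i j => HasFDerivAt.comp P (g := fun u => pd2 x u i j) (hG' i j) hu
  have eL := fun i => HasFDerivAt.comp P (g := fun l => extOne l i) (extOne_hasFDerivAt l i) hl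
  have eM := fun i => HasFDerivAt.comp P (g := fun l => extZero l i) (extZero_hasFDerivAt m i) hm
  have eY := (eX.add (haa.smul (HasFDerivAt.fun_sum (u := Finset.univ)
    fun i _ => (eL i).smul (eF i)))).add
    (hbb.smul ((HasFDerivAt.fun_sum (u := Finset.univ) fun i _ =>
      HasFDerivAt.fun_sum (u := Finset.univ) fun j _ => ((eL i).mul (eL j)).smul (eG i j)).add
      ((HasFDerivAt.fun_sum (u := Finset.univ) fun i _ => (eM i).smul (eF i)).const_smul (2 : ℂ))))
  have hyfun : y = fun p => x p.1 + p.2.2.2.1 • (∑ i, extOne p.2.1 i • pd1 x p.1 i)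
        + p.2.2.2.2 • ((∑ i, ∑ j, (extOne p.2.1 i * extOne p.2.1 j) • pd2 x p.1 i j)
            + (2 : ℂ) • ∑ i, extZero p.2.2.1 i • pd1 x p.1 i) := by
    funext ⟨u, l, m, a, b⟩
    exact hy u l m a b
  have hD : ∀ du dl dm da db, fderiv ℂ y P (du, dl, dm, da, db) =
      X' du + (a • (∑ i, (extOne l i • F' i du + prz i dl • pd1 x u₀ i))
        + da • ∑ i, extOne l i • pd1 x u₀ i)
      + (b • ((∑ i, ∑ j, ((extOne l i * extOne l j) • G' i j du
            + (extOne l i * prz j dl + extOne l j * prz i dl) • pd2 x u₀ i j))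
          + (2 : ℂ) • ∑ i, (extZero m i • F' i du + prz i dm • pd1 x u₀ i))
        + db • ((∑ i, ∑ j, (extOne l i * extOne l j) • pd2 x u₀ i j)
            + (2 : ℂ) • ∑ i, extZero m i • pd1 x u₀ i)) := by
    intro du dl dm da db
    have := eY.congr_of_eventuallyEq (f₁ := y)
      (Filter.Eventually.of_forall fun p => by rw [hyfun]; rfl)
    rw [this.fderiv]
    simp [hP]
  have hyP := hy u₀ l m a b
  set D := fderiv ℂ y P with hDdef
  -- the partial derivatives
  have Du : ∀ k, D (Pi.single k 1, 0, 0, 0, 0) = pd1 x u₀ k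
      + a • (∑ i, extOne l i • pd2 x u₀ i k)
      + b • ((∑ i, ∑ j, (extOne l i * extOne l j) • pd3 x u₀ k i j)
              + (2 : ℂ) • ∑ j : {i : Fin n // i ≠ 0}, m j • pd2 x u₀ k (j : Fin n)) := by
    intro k
    rw [hD, hXk]
    have e : ∑ i, extZero m i • pd2 x u₀ k i
        = ∑ j : {i : Fin n // i ≠ 0}, m j • pd2 x u₀ k (j : Fin n) := by
      rw [sum_split]
      have h0 : extZero m 0 = 0 := by simp [extZero]
      rw [h0, zero_smul, zero_add]
      refine Finset.sum_congr rfl fun j _ => ?_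
      simp [extZero, j.2]
    have e2 : ∑ i, extOne l i • pd2 x u₀ k i = ∑ i, extOne l i • pd2 x u₀ i k :=
      Finset.sum_congr rfl fun i _ => by rw [hsymm]
    simp [hFk, hGk, e, e2]
  have Dl : ∀ j : {i : Fin n // i ≠ 0}, D (0, Pi.single j 1, 0, 0, 0) = a • pd1 x u₀ j
      + (2 * b) • (∑ i, extOne l i • pd2 x u₀ i j) := by
    intro j
    rw [hD]
    have e : ∑ i, extOne l i • pd2 x u₀ j i = ∑ i, extOne l i • pd2 x u₀ i j :=
      Finset.sum_congr rfl fun i _ => by rw [hsymm]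
    simp [prz_single, add_smul, Finset.sum_add_distrib, ite_smul]
    rw [e]
    module
  have Dm : ∀ j : {i : Fin n // i ≠ 0}, D (0, 0, Pi.single j 1, 0, 0)
      = (2 * b) • pd1 x u₀ j := by
    intro j
    rw [hD]
    simp [prz_single, ite_smul]
    module
  have Da : D (0, 0, 0, 1, 0) = ∑ i, extOne l i • pd1 x u₀ i := by
    rw [hD]; simp
  have hQ : ∑ i, ∑ j, (extOne l i * extOne l j) • pd2 x u₀ i j
      = ∑ j, extOne l j • ∑ i, extOne l i • pd2 x u₀ i j := by
    rw [Finset.sum_comm]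
    refine Finset.sum_congr rfl fun j _ => ?_
    rw [Finset.smul_sum]
    refine Finset.sum_congr rfl fun i _ => ?_
    rw [smul_smul, mul_comm]
  have Db : D (0, 0, 0, 0, 1) = (∑ j, extOne l j • ∑ i, extOne l i • pd2 x u₀ i j)
      + (2 : ℂ) • ∑ i, extZero m i • pd1 x u₀ i := by
    rw [hD, ← hQ]; simp
  rw [hQ] at hyP
  have Ddec : ∀ du dl dm da db, D (du, dl, dm, da, db) =
      (∑ k, du k • D (Pi.single k 1, 0, 0, 0, 0)) + (∑ j, dl j • D (0, Pi.single j 1, 0, 0, 0))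
      + (∑ j, dm j • D (0, 0, Pi.single j 1, 0, 0)) + da • D (0, 0, 0, 1, 0)
      + db • D (0, 0, 0, 0, 1) := by
    intro du dl dm da db
    simp only [← map_smul, ← map_sum, ← map_add]
    congr 1
    simp [Prod.ext_iff, Prod.fst_sum, Prod.snd_sum, ← pi_eq_sum_univ']
  have hone : extOne l 0 = 1 := by simp [extOne]
  clear_value D
  clear eX eF eG eL eM eY hyfun hD hu h2 hl hm haa hbb hy
  generalize hw : (fun j => ∑ i, extOne l i • pd2 x u₀ i j) = w
  have hw' : ∀ j, ∑ i, extOne l i • pd2 x u₀ i j = w j := fun j => congrFun hw j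
  generalize hv : (fun k =>
            (∑ i, ∑ j, (extOne l i * extOne l j) • pd3 x u₀ k i j)
              + (2 : ℂ) • ∑ j : {i : Fin n // i ≠ 0}, m j • pd2 x u₀ k (j : Fin n)) = v
  have hv' : ∀ k, (∑ i, ∑ j, (extOne l i * extOne l j) • pd3 x u₀ k i j)
              + (2 : ℂ) • ∑ j : {i : Fin n // i ≠ 0}, m j • pd2 x u₀ k (j : Fin n) = v k :=
    fun k => congrFun hv k
  simp only [hw', hv'] at Du Dl Db hyP
  apply le_antisymm
  · rw [Submodule.span_le]
    set T := Submodule.span ℂ ({x u₀} ∪ Set.range (pd1 x u₀) ∪ Set.range w ∪ Set.range v) with hT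
    have t0 : x u₀ ∈ T := Submodule.subset_span (by simp)
    have t1 : ∀ k, pd1 x u₀ k ∈ T := fun k => Submodule.subset_span (by simp)
    have t2 : ∀ k, w k ∈ T := fun k => Submodule.subset_span (by simp)
    have t3 : ∀ k, v k ∈ T := fun k => Submodule.subset_span (by simp)
    have s1 : ∀ c : Fin n → ℂ, ∑ i, c i • pd1 x u₀ i ∈ T :=
      fun c => T.sum_mem fun i _ => T.smul_mem _ (t1 i)
    have s2 : ∀ c : Fin n → ℂ, ∑ i, c i • w i ∈ T :=
      fun c => T.sum_mem fun i _ => T.smul_mem _ (t2 i)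
    rintro z (rfl | ⟨⟨du, dl, dm, da, db⟩, rfl⟩)
    · rw [hyP]
      exact T.add_mem (T.add_mem t0 (T.smul_mem _ (s1 _)))
        (T.smul_mem _ (T.add_mem (s2 _) (T.smul_mem _ (s1 _))))
    · rw [Ddec, Da, Db]
      simp only [Du, Dl, Dm]
      refine T.add_mem (T.add_mem (T.add_mem (T.add_mem ?_ ?_) ?_) ?_) ?_
      · exact T.sum_mem fun k _ => T.smul_mem _ (T.add_mem (T.add_mem (t1 k)
          (T.smul_mem _ (t2 k))) (T.smul_mem _ (t3 k)))
      · exact T.sum_mem fun k _ => T.smul_mem _ (T.add_mem (T.smul_mem _ (t1 k))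
          (T.smul_mem _ (t2 k)))
      · exact T.sum_mem fun k _ => T.smul_mem _ (T.smul_mem _ (t1 k))
      · exact T.smul_mem _ (s1 _)
      · exact T.smul_mem _ (T.add_mem (s2 _) (T.smul_mem _ (s1 _)))
  · rw [Submodule.span_le]
    set S := Submodule.span ℂ ({y P} ∪ Set.range D) with hS
    have sy : y P ∈ S := Submodule.subset_span (by simp)
    have sD : ∀ p, D p ∈ S := fun p => Submodule.subset_span (Or.inr ⟨p, rfl⟩)
    have b2 : 2 * b ≠ 0 := mul_ne_zero two_ne_zero hb
    -- an all-but-zero family plus a combination with leading coefficient one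
    have key : ∀ f : Fin n → (Fin N → ℂ), (∀ j : {i : Fin n // i ≠ 0}, f j ∈ S) →
        ∑ i, extOne l i • f i ∈ S → ∀ k, f k ∈ S := by
      intro f hf hs k
      by_cases hk : k = 0
      · subst hk
        rw [sum_split, hone, one_smul] at hs
        exact (S.add_mem_iff_left (S.sum_mem fun j _ => S.smul_mem _ (hf j))).1 hs
      · exact hf ⟨k, hk⟩
    have s1 : ∀ k, pd1 x u₀ k ∈ S := by
      apply key
      · intro j
        have := sD (0, 0, Pi.single j 1, 0, 0)
        rw [Dm] at this
        exact (S.smul_mem_iff b2).1 this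
      · rw [← Da]; exact sD _
    have c1 : ∀ c : Fin n → ℂ, ∑ i, c i • pd1 x u₀ i ∈ S :=
      fun c => S.sum_mem fun i _ => S.smul_mem _ (s1 i)
    have s2 : ∀ k, w k ∈ S := by
      apply key
      · intro j
        have := sD (0, Pi.single j 1, 0, 0, 0)
        rw [Dl] at this
        exact (S.smul_mem_iff b2).1 ((S.add_mem_iff_right (S.smul_mem _ (s1 j))).1 this)
      · have := sD (0, 0, 0, 0, 1)
        rw [Db] at this
        exact (S.add_mem_iff_left (S.smul_mem _ (c1 _))).1 this
    have c2 : ∀ c : Fin n → ℂ, ∑ i, c i • w i ∈ S :=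
      fun c => S.sum_mem fun i _ => S.smul_mem _ (s2 i)
    have s3 : ∀ k, v k ∈ S := by
      intro k
      have := sD (Pi.single k 1, 0, 0, 0, 0)
      rw [Du] at this
      exact (S.smul_mem_iff hb).1 ((S.add_mem_iff_right
        (S.add_mem (s1 k) (S.smul_mem _ (s2 k)))).1 this)
    have s0 : x u₀ ∈ S := by
      rw [hyP] at sy
      exact (S.add_mem_iff_left (S.smul_mem _ (c1 _))).1 ((S.add_mem_iff_left
        (S.smul_mem _ (S.add_mem (c2 _) (S.smul_mem _ (c1 _))))).1 sy)
    rintro z (((rfl | ⟨k, rfl⟩) | ⟨k, rfl⟩) | ⟨k, rfl⟩)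
    · exact s0
    · exact s1 k
    · exact s2 k
    · exact s3 k
end
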